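/- arXiv:2008.05558 — 2 statements merged into one kernel-verified Lean document; each statement's English description precedes it below -/
import Mathlib

section
/- Let G be a graph on n vertices with adjacency matrix A and stability number α(G). Then the minimum value of x^T (A + I) x over the standard simplex Δ_n = {x ∈ ℝ^n : x ≥ 0, Σ_i x_i = 1} equals 1/α(G), where I is the n×n identity matrix. -/
open Matrix
open scoped RealInnerProductSpace

/-- The stability (independence) number of a graph: the size of the largest set of
pairwise non-adjacent vertices. -/
noncomputable def stabilityNumber {V : Type*} (G : SimpleGraph V) : ℕ :=
  sSup {k | ∃ s : Finset V, s.card = k ∧ ∀ i ∈ s, ∀ j ∈ s, i ≠ j → ¬ G.Adj i j}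

/-- The matrix `M_{A,k} = k A + k I - J`, where `J` is the all-ones matrix. -/
noncomputable def MAk {n : ℕ} (A : Matrix (Fin n) (Fin n) ℝ) (k : ℝ) : Matrix (Fin n) (Fin n) ℝ :=
  k • A + k • (1 : Matrix (Fin n) (Fin n) ℝ) - Matrix.of (fun _ _ => (1 : ℝ))

/-- Entrywise square of a vector. -/
def vsq {n : ℕ} (x : Fin n → ℝ) : Fin n → ℝ := fun i => (x i) ^ 2

/-- A symmetric matrix `M` is copositive if `xᵀ M x ≥ 0` for all entrywise nonnegative `x`. -/
def Copositive {n : ℕ} (M : Matrix (Fin n) (Fin n) ℝ) : Prop :=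
  ∀ x : Fin n → ℝ, (∀ i, 0 ≤ x i) → 0 ≤ x ⬝ᵥ M.mulVec x

/-- The quartic form `p_M(x) = (x²)ᵀ M (x²)`. -/
noncomputable def quarticForm {n : ℕ} (M : Matrix (Fin n) (Fin n) ℝ) :
    EuclideanSpace ℝ (Fin n) → ℝ :=
  fun x => vsq x ⬝ᵥ M.mulVec (vsq x)

/-- The quadratic form `q_M(x) = xᵀ M x`. -/
noncomputable def quadForm {n : ℕ} (M : Matrix (Fin n) (Fin n) ℝ) :
    EuclideanSpace ℝ (Fin n) → ℝ :=
  fun x => x ⬝ᵥ M.mulVec x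

/-- `xm` is a local minimizer of `f` over `Ω`: `xm ∈ Ω` and there is `ε > 0` such that
`f xm ≤ f x` for all `x ∈ Ω` with `‖x - xm‖ ≤ ε` (Euclidean norm). -/
def IsLocalMinimizer {n : ℕ} (f : EuclideanSpace ℝ (Fin n) → ℝ)
    (Ω : Set (EuclideanSpace ℝ (Fin n))) (xm : EuclideanSpace ℝ (Fin n)) : Prop :=
  xm ∈ Ω ∧ ∃ ε > 0, ∀ x ∈ Ω, ‖x - xm‖ ≤ ε → f xm ≤ f x

/-- `xm` is a strict local minimizer of `f` over `Ω`: `xm ∈ Ω` and there is `ε > 0` such that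
`f xm < f x` for all `x ∈ Ω` with `x ≠ xm` and `‖x - xm‖ ≤ ε` (Euclidean norm). -/
def IsStrictLocalMinimizer {n : ℕ} (f : EuclideanSpace ℝ (Fin n) → ℝ)
    (Ω : Set (EuclideanSpace ℝ (Fin n))) (xm : EuclideanSpace ℝ (Fin n)) : Prop :=
  xm ∈ Ω ∧ ∃ ε > 0, ∀ x ∈ Ω, x ≠ xm → ‖x - xm‖ ≤ ε → f xm < f x

/-!
Moving the mass of a vertex `j` onto a vertex `i` changes `xᵀ M x` by
`2 * x j * ((M x) i - (M x) j) + x j ^ 2 * (M i i + M j j - 2 * M i j)`, where the second term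
vanishes when `M = A + I` and `i`, `j` are adjacent. So, whenever two adjacent vertices
both carry mass, moving all of it in the right direction does not increase the form, and after
finitely many moves the support is a stable set. There `xᵀ (A + I) x = ∑ i, x i ^ 2`, and
Cauchy–Schwarz bounds this from below by `1 / α(G)`, with equality for the uniform distribution on
a maximum stable set.
-/

theorem stabilityNumber_eq_indepNum {V : Type*} (G : SimpleGraph V) :
    stabilityNumber G = G.indepNum := by
  simp only [stabilityNumber, SimpleGraph.indepNum, SimpleGraph.isNIndepSet_iff,
    SimpleGraph.IsIndepSet, Set.Pairwise, Finset.mem_coe, and_comm]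

theorem indepNum_pos {V : Type*} [Finite V] [Nonempty V] (G : SimpleGraph V) :
    0 < G.indepNum := by
  obtain ⟨v⟩ := ‹Nonempty V›
  have hv : G.IsIndepSet ({v} : Finset V) := by simp
  exact (Finset.card_singleton v).ge.trans hv.card_le_indepNum

section ShiftMass

variable {V K : Type*} [DecidableEq V]

/-- The vector obtained from `x` by moving the whole mass `x j` of `j` onto `i`. It is written as a
step in the direction `Pi.single i 1 - Pi.single j 1`, so it equals `x` when `i = j`. -/
def shiftMass [Ring K] (x : V → K) (i j : V) : V → K :=
  x + x j • (Pi.single i 1 - Pi.single j 1)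

theorem sum_shiftMass [Fintype V] [Ring K] (x : V → K) (i j : V) :
    ∑ l, shiftMass x i j l = ∑ l, x l := by
  simp [shiftMass, Finset.sum_add_distrib, ← Finset.mul_sum]

theorem shiftMass_nonneg [Ring K] [PartialOrder K] [IsOrderedRing K] {x : V → K} (hx : 0 ≤ x)
    (i j : V) : 0 ≤ shiftMass x i j := by
  intro l
  have hi : (0 : V → K) ≤ Pi.single i 1 := Pi.single_nonneg.2 zero_le_one
  obtain rfl | hlj := eq_or_ne l j
  · simpa [shiftMass, mul_sub] using mul_nonneg (hx l) (hi l)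
  · simpa [shiftMass, hlj] using add_nonneg (hx l) (mul_nonneg (hx j) (hi l))

theorem support_shiftMass_ssubset [Ring K] {x : V → K} {i j : V} (hij : i ≠ j)
    (hi : i ∈ x.support) (hj : j ∈ x.support) :
    (shiftMass x i j).support ⊂ x.support := by
  refine (Set.ssubset_iff_of_subset fun l hl => ?_).2 ⟨j, hj, by simp [shiftMass, hij.symm]⟩
  by_contra hxl
  have hli : l ≠ i := fun h => hxl (h ▸ hi)
  have hlj : l ≠ j := fun h => hxl (h ▸ hj)
  exact hl (by simpa [shiftMass, hli, hlj] using hxl)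

theorem dotProduct_mulVec_shiftMass [Fintype V] [CommRing K] {M : Matrix V V K} (hM : M.IsSymm)
    (x : V → K) (i j : V) :
    shiftMass x i j ⬝ᵥ M *ᵥ shiftMass x i j =
      x ⬝ᵥ M *ᵥ x + 2 * x j * ((M *ᵥ x) i - (M *ᵥ x) j) +
        x j ^ 2 * (M i i + M j j - 2 * M i j) := by
  set d : V → K := Pi.single i 1 - Pi.single j 1 with hd
  have linear_term : d ⬝ᵥ M *ᵥ x = (M *ᵥ x) i - (M *ᵥ x) j := by
    simp [hd, sub_dotProduct]
  have linear_term_symm : x ⬝ᵥ M *ᵥ d = d ⬝ᵥ M *ᵥ x := by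
    rw [← dotProduct_transpose_mulVec, hM.eq]
  have quadratic_term : d ⬝ᵥ M *ᵥ d = M i i + M j j - 2 * M i j := by
    simp only [hd, sub_dotProduct, mulVec_sub, mulVec_single_one, single_one_dotProduct,
      Pi.sub_apply, col_apply, hM.apply i j]
    ring
  simp only [shiftMass, ← hd, mulVec_add, mulVec_smul, add_dotProduct, dotProduct_add,
    smul_dotProduct, dotProduct_smul, smul_eq_mul, linear_term_symm, linear_term, quadratic_term]
  ring

variable [Fintype V] [CommRing K] [LinearOrder K] [IsStrictOrderedRing K] {M : Matrix V V K}

theorem dotProduct_mulVec_shiftMass_le (hM : M.IsSymm) {x : V → K} {i j : V} (hj : 0 ≤ x j)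
    (hle : (M *ᵥ x) i ≤ (M *ᵥ x) j) (hij : M i i + M j j ≤ 2 * M i j) :
    shiftMass x i j ⬝ᵥ M *ᵥ shiftMass x i j ≤ x ⬝ᵥ M *ᵥ x := by
  rw [dotProduct_mulVec_shiftMass hM]
  have hlin : 2 * x j * ((M *ᵥ x) i - (M *ᵥ x) j) ≤ 0 :=
    mul_nonpos_of_nonneg_of_nonpos (by positivity) (sub_nonpos.2 hle)
  have hquad : x j ^ 2 * (M i i + M j j - 2 * M i j) ≤ 0 :=
    mul_nonpos_of_nonneg_of_nonpos (sq_nonneg _) (sub_nonpos.2 hij)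
  linarith

theorem exists_dotProduct_mulVec_shiftMass_le (hM : M.IsSymm) {x : V → K} (hx : 0 ≤ x)
    (hsupp : ¬ x.support.Pairwise fun i j => 2 * M i j < M i i + M j j) :
    ∃ i ∈ x.support, ∃ j ∈ x.support, i ≠ j ∧
      shiftMass x i j ⬝ᵥ M *ᵥ shiftMass x i j ≤ x ⬝ᵥ M *ᵥ x := by
  simp only [Set.Pairwise, not_forall, not_lt] at hsupp
  obtain ⟨i, hi, j, hj, hne, hij⟩ := hsupp
  obtain hle | hle := le_total ((M *ᵥ x) i) ((M *ᵥ x) j)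
  · exact ⟨i, hi, j, hj, hne, dotProduct_mulVec_shiftMass_le hM (hx j) hle hij⟩
  · have hji : M j j + M i i ≤ 2 * M j i := by rwa [add_comm, hM.apply i j]
    exact ⟨j, hj, i, hi, hne.symm, dotProduct_mulVec_shiftMass_le hM (hx i) hle hji⟩

end ShiftMass

theorem exists_pairwise_support_dotProduct_mulVec_le {V K : Type*} [Fintype V] [CommRing K]
    [LinearOrder K] [IsStrictOrderedRing K] {M : Matrix V V K} (hM : M.IsSymm) {x : V → K}
    (hx : 0 ≤ x) : ∃ y : V → K, 0 ≤ y ∧ ∑ i, y i = ∑ i, x i ∧ y ⬝ᵥ M *ᵥ y ≤ x ⬝ᵥ M *ᵥ x ∧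
      y.support.Pairwise fun i j => 2 * M i j < M i i + M j j := by
  classical
  induction hs : x.support using WellFoundedLT.induction generalizing x with
  | ind s ih =>
    subst hs
    by_cases hsupp : x.support.Pairwise fun i j => 2 * M i j < M i i + M j j
    · exact ⟨x, hx, rfl, le_rfl, hsupp⟩
    · obtain ⟨i, hi, j, hj, hne, hle⟩ := exists_dotProduct_mulVec_shiftMass_le hM hx hsupp
      obtain ⟨y, hy, hsum, hyle, hysupp⟩ :=
        ih _ (support_shiftMass_ssubset hne hi hj) (shiftMass_nonneg hx i j) rfl
      exact ⟨y, hy, hsum.trans (sum_shiftMass x i j), hyle.trans hle, hysupp⟩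

section AdjMatrix

variable {V K : Type*} [Fintype V] {G : SimpleGraph V}

theorem dotProduct_adjMatrix_add_one_mulVec_of_isIndepSet_support [DecidableEq V]
    [DecidableRel G.Adj] [NonAssocSemiring K] {x : V → K} (hx : G.IsIndepSet x.support) :
    x ⬝ᵥ (G.adjMatrix K + 1) *ᵥ x = x ⬝ᵥ x := by
  have hadj : x ⬝ᵥ G.adjMatrix K *ᵥ x = 0 := by
    refine Finset.sum_eq_zero fun i _ => ?_
    rw [SimpleGraph.adjMatrix_mulVec_apply, Finset.mul_sum]
    refine Finset.sum_eq_zero fun j hj => ?_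
    rw [SimpleGraph.mem_neighborFinset] at hj
    by_contra hne
    exact hx (left_ne_zero_of_mul hne) (right_ne_zero_of_mul hne) hj.ne hj
  rw [add_mulVec, dotProduct_add, hadj, zero_add, one_mulVec]

theorem sq_sum_le_indepNum_mul_dotProduct_self [CommRing K] [LinearOrder K]
    [IsStrictOrderedRing K] {x : V → K} (hx : G.IsIndepSet x.support) :
    (∑ i, x i) ^ 2 ≤ G.indepNum * (x ⬝ᵥ x) := by
  classical
  set s : Finset V := {i | x i ≠ 0} with hs
  have hcard : s.card ≤ G.indepNum :=
    SimpleGraph.IsIndepSet.card_le_indepNum (by simpa [hs, Function.support] using hx)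
  calc (∑ i, x i) ^ 2 = (∑ i ∈ s, x i) ^ 2 := by rw [Finset.sum_filter_ne_zero]
    _ ≤ s.card * ∑ i ∈ s, x i ^ 2 := sq_sum_le_card_mul_sum_sq
    _ ≤ G.indepNum * ∑ i, x i ^ 2 := by
      gcongr
      exact s.subset_univ
    _ = G.indepNum * (x ⬝ᵥ x) := by simp only [dotProduct, sq]

theorem sq_sum_le_indepNum_mul_dotProduct_adjMatrix_add_one_mulVec [DecidableEq V]
    [DecidableRel G.Adj] [CommRing K] [LinearOrder K] [IsStrictOrderedRing K] {x : V → K}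
    (hx : 0 ≤ x) : (∑ i, x i) ^ 2 ≤ G.indepNum * (x ⬝ᵥ (G.adjMatrix K + 1) *ᵥ x) := by
  obtain ⟨y, -, hsum, hle, hpair⟩ :=
    exists_pairwise_support_dotProduct_mulVec_le (G.isSymm_adjMatrix.add isSymm_one) hx
  have hy : G.IsIndepSet y.support := hpair.imp_on fun i _ j _ hne hlt hadj => by
    norm_num [hadj, hne] at hlt
  calc (∑ i, x i) ^ 2 = (∑ i, y i) ^ 2 := by rw [hsum]
    _ ≤ G.indepNum * (y ⬝ᵥ y) := sq_sum_le_indepNum_mul_dotProduct_self hy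
    _ = G.indepNum * (y ⬝ᵥ (G.adjMatrix K + 1) *ᵥ y) := by
      rw [dotProduct_adjMatrix_add_one_mulVec_of_isIndepSet_support hy]
    _ ≤ G.indepNum * (x ⬝ᵥ (G.adjMatrix K + 1) *ᵥ x) := by gcongr

end AdjMatrix

section Centroid

variable {V K : Type*} [Fintype V] [Field K] {s : Finset V}

theorem centroidWeightsIndicator_mem_stdSimplex [LinearOrder K] [IsStrictOrderedRing K]
    (hs : s.Nonempty) : s.centroidWeightsIndicator K ∈ stdSimplex K V := by
  refine ⟨fun i => ?_, s.sum_centroidWeightsIndicator_eq_one_of_nonempty K hs⟩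
  exact Set.indicator_nonneg (fun _ _ => by simp) i

theorem centroidWeightsIndicator_dotProduct_self :
    s.centroidWeightsIndicator K ⬝ᵥ s.centroidWeightsIndicator K = 1 / (s.card : K) := by
  classical
  have hcard : (s.card : K) * ((s.card : K)⁻¹ * (s.card : K)⁻¹) = (s.card : K)⁻¹ := by
    simpa only [inv_inv, mul_comm] using mul_self_mul_inv (s.card : K)⁻¹
  simpa [dotProduct, Finset.centroidWeightsIndicator_def, Set.indicator_apply] using hcard

end Centroid

theorem min_simplex_eq_inv_stabilityNumber_general {V K : Type*} [Fintype V] [DecidableEq V]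
    [Nonempty V] [Field K] [LinearOrder K] [IsStrictOrderedRing K] (G : SimpleGraph V)
    [DecidableRel G.Adj] :
    IsLeast ((fun x : V → K => x ⬝ᵥ (G.adjMatrix K + (1 : Matrix V V K)).mulVec x) ''
      stdSimplex K V) (1 / (stabilityNumber G : K)) := by
  rw [stabilityNumber_eq_indepNum]
  have hpos : 0 < G.indepNum := indepNum_pos G
  constructor
  · obtain ⟨s, hs, hcard⟩ := G.exists_isNIndepSet_indepNum
    have hne : s.Nonempty := Finset.card_pos.1 (hcard ▸ hpos)
    have hsupp : G.IsIndepSet (s.centroidWeightsIndicator K).support :=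
      hs.mono Set.support_indicator_subset
    refine ⟨_, centroidWeightsIndicator_mem_stdSimplex hne, ?_⟩
    simp only [dotProduct_adjMatrix_add_one_mulVec_of_isIndepSet_support hsupp,
      centroidWeightsIndicator_dotProduct_self, hcard]
  · rintro _ ⟨x, ⟨hx, hsum⟩, rfl⟩
    rw [div_le_iff₀' (Nat.cast_pos.2 hpos)]
    simpa only [hsum, one_pow] using
      sq_sum_le_indepNum_mul_dotProduct_adjMatrix_add_one_mulVec (G := G) hx

/-- For a graph `G` on `n ≥ 1` vertices with adjacency matrix `A` and stability number `α(G)`,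
the minimum of `xᵀ (A + I) x` over the standard simplex is `1/α(G)`. -/
theorem min_simplex_eq_inv_stabilityNumber {n : ℕ} (hn : 0 < n)
    (G : SimpleGraph (Fin n)) [DecidableRel G.Adj] :
    IsLeast ((fun x : Fin n → ℝ =>
        x ⬝ᵥ (G.adjMatrix ℝ + (1 : Matrix (Fin n) (Fin n) ℝ)).mulVec x) '' stdSimplex ℝ (Fin n))
      (1 / (stabilityNumber G : ℝ)) := by
  have : Nonempty (Fin n) := ⟨⟨0, hn⟩⟩
  exact min_simplex_eq_inv_stabilityNumber_general G
end

section
/- Let M ∈ ℝ^{n×n} be symmetric and define p(x) := (x²)^T M (x²). If x̄ ∈ ℝ^n is a second-order point of p, then the principal submatrix of M whose rows and columns correspond to the indices of the nonzero entries of x̄ is positive semidefinite, and the vector M x̄² has zero entries at all indices where x̄ is nonzero. -/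
open Matrix
open scoped RealInnerProductSpace

attribute [local instance] Classical.propDecidable

/-! The Hessian form of `p(x) = (x²)ᵀ M x²` at `x` is `v ↦ 4 (v²)ᵀ M x² + 8 (x v)ᵀ M (x v)`, and the
gradient of `p` is `4 x (M x²)`, all vector products being entrywise. A vanishing gradient makes
`M x²` vanish on the support of `x`, which kills the first term of the Hessian form for every `v`
supported there. Since `v ↦ x v` permutes the vectors supported where `x` is nonzero, the remaining
term takes, up to the factor 8, every value of the quadratic form of the principal submatrix. -/

open WithLp

section Calculus

variable {𝕜 ι κ : Type*} [NontriviallyNormedField 𝕜] [Fintype ι]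

lemma hasDerivAt_mulVec [Finite κ] (M : Matrix κ ι 𝕜) {y : 𝕜 → ι → 𝕜} {y' : ι → 𝕜} {t : 𝕜}
    (hy : HasDerivAt y y' t) : HasDerivAt (fun s ↦ M *ᵥ y s) (M *ᵥ y') t := by
  have := Fintype.ofFinite κ
  exact hasDerivAt_pi.2 fun i ↦ .fun_sum fun j _ ↦ (hasDerivAt_pi.1 hy j).const_mul (M i j)

lemma hasDerivAt_dotProduct {y z : 𝕜 → ι → 𝕜} {y' z' : ι → 𝕜} {t : 𝕜}
    (hy : HasDerivAt y y' t) (hz : HasDerivAt z z' t) :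
    HasDerivAt (fun s ↦ y s ⬝ᵥ z s) (y' ⬝ᵥ z t + y t ⬝ᵥ z') t := by
  simp only [dotProduct, ← Finset.sum_add_distrib]
  exact .fun_sum fun i _ ↦ (hasDerivAt_pi.1 hy i).mul (hasDerivAt_pi.1 hz i)

lemma hasDerivAt_dotProduct_mulVec_self {M : Matrix ι ι 𝕜} (hM : M.IsSymm) {y : 𝕜 → ι → 𝕜}
    {y' : ι → 𝕜} {t : 𝕜} (hy : HasDerivAt y y' t) :
    HasDerivAt (fun s ↦ y s ⬝ᵥ M *ᵥ y s) (2 * (y' ⬝ᵥ M *ᵥ y t)) t := by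
  have hswap : y t ⬝ᵥ M *ᵥ y' = y' ⬝ᵥ M *ᵥ y t := by
    rw [dotProduct_mulVec, dotProduct_comm, ← mulVec_transpose, hM.eq]
  refine (hasDerivAt_dotProduct hy (hasDerivAt_mulVec M hy)).congr_deriv ?_
  rw [hswap, two_mul]

lemma gradient_eq_of_hasLineDerivAt {𝕜 F : Type*} [RCLike 𝕜] [NormedAddCommGroup F]
    [InnerProductSpace 𝕜 F] [CompleteSpace F] {f : F → 𝕜} {x g : F} (hf : DifferentiableAt 𝕜 f x)
    (hg : ∀ v, HasLineDerivAt 𝕜 f (inner 𝕜 g v) x v) : gradient f x = g :=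
  ext_inner_right 𝕜 fun v ↦ by
    rw [inner_gradient_left, (hf.hasFDerivAt.hasLineDerivAt v).unique (hg v)]

end Calculus

section PosSemidef

variable {ι κ : Type*} [Fintype ι]

lemma posSemidef_submatrix_of_injective {R : Type*} [Ring R] [PartialOrder R] [StarRing R]
    {M : Matrix ι ι R} (hM : M.IsHermitian) {e : κ → ι} (he : e.Injective)
    (h : ∀ z : ι → R, (∀ i ∉ Set.range e, z i = 0) → 0 ≤ star z ⬝ᵥ M *ᵥ z) :
    (M.submatrix e e).PosSemidef := by
  have := Fintype.ofInjective e he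
  refine .of_dotProduct_mulVec_nonneg (hM.submatrix e) fun y ↦ ?_
  set z : ι → R := Function.extend e y 0
  have hz (k : κ) : z (e k) = y k := he.extend_apply y 0 k
  have hz₀ (i : ι) (hi : i ∉ Set.range e) : z i = 0 := Function.extend_apply' _ _ _ hi
  have hmul (k : κ) : (M.submatrix e e *ᵥ y) k = (M *ᵥ z) (e k) :=
    Fintype.sum_of_injective e he _ _ (fun i hi ↦ by simp [hz₀ i hi]) fun j ↦ by simp [hz]
  have hdot : star y ⬝ᵥ M.submatrix e e *ᵥ y = star z ⬝ᵥ M *ᵥ z :=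
    Fintype.sum_of_injective e he _ _ (fun i hi ↦ by simp [hz₀ i hi]) fun k ↦ by simp [hz, hmul]
  exact hdot ▸ h z hz₀

lemma posSemidef_submatrix_support {R : Type*} [Field R] [PartialOrder R] [StarRing R]
    [TrivialStar R] {M : Matrix ι ι R} (hM : M.IsSymm) {x : ι → R}
    (h : ∀ v : ι → R, (∀ i, x i = 0 → v i = 0) → 0 ≤ (x * v) ⬝ᵥ M *ᵥ (x * v)) :
    (M.submatrix (Subtype.val : {i // x i ≠ 0} → ι) Subtype.val).PosSemidef := by
  have hHerm : M.IsHermitian := (conjTranspose_eq_transpose_of_trivial M).trans hM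
  refine posSemidef_submatrix_of_injective hHerm Subtype.val_injective fun z hz ↦ ?_
  have hxz : x * (z / x) = z := by
    ext i
    refine mul_div_cancel_of_imp' fun hi ↦ hz i ?_
    simpa using hi
  -- Where `x` vanishes, so does `z / x`, by the convention `a / 0 = 0`.
  simpa only [hxz, star_trivial] using h (z / x) fun i hi ↦ by simp [hi]

end PosSemidef

section QuarticForm

variable {n : ℕ} {M : Matrix (Fin n) (Fin n) ℝ}

lemma hasDerivAt_vsq {y : ℝ → Fin n → ℝ} {y' : Fin n → ℝ} {t : ℝ} (hy : HasDerivAt y y' t) :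
    HasDerivAt (fun s ↦ vsq (y s)) ((2 : ℝ) • (y t * y')) t := by
  refine (hy.pow 2).congr_deriv ?_
  ext i
  simp [mul_assoc]

lemma differentiable_quarticForm (M : Matrix (Fin n) (Fin n) ℝ) :
    Differentiable ℝ (quarticForm M) := by
  unfold quarticForm vsq dotProduct mulVec dotProduct
  fun_prop

lemma hasLineDerivAt_quarticForm (hM : M.IsSymm) (x v : EuclideanSpace ℝ (Fin n)) :
    HasLineDerivAt ℝ (quarticForm M) ⟪toLp 2 ((4 : ℝ) • (x.ofLp * M *ᵥ vsq x)), v⟫ x v := by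
  have hline : HasDerivAt (fun t : ℝ ↦ x.ofLp + t • v.ofLp) v.ofLp 0 :=
    (hasFDerivAt_id x.ofLp).hasLineDerivAt v.ofLp
  refine (hasDerivAt_dotProduct_mulVec_self hM (hasDerivAt_vsq hline)).congr_deriv ?_
  simp only [EuclideanSpace.inner_eq_star_dotProduct, star_trivial, dotProduct, Finset.mul_sum,
    zero_smul, add_zero, Pi.smul_apply, Pi.mul_apply, smul_eq_mul]
  exact Finset.sum_congr rfl fun i _ ↦ by ring

lemma gradient_quarticForm (hM : M.IsSymm) (x : EuclideanSpace ℝ (Fin n)) :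
    gradient (quarticForm M) x = toLp 2 ((4 : ℝ) • (x.ofLp * M *ᵥ vsq x)) :=
  gradient_eq_of_hasLineDerivAt (differentiable_quarticForm M x) (hasLineDerivAt_quarticForm hM x)

lemma differentiable_gradient_quarticForm (hM : M.IsSymm) :
    Differentiable ℝ (gradient (quarticForm M)) := by
  rw [funext (gradient_quarticForm hM), differentiable_euclidean]
  simp only [Pi.smul_apply, Pi.mul_apply, mulVec, dotProduct, vsq]
  fun_prop

lemma hasLineDerivAt_gradient_quarticForm (hM : M.IsSymm) (x v : EuclideanSpace ℝ (Fin n)) :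
    HasLineDerivAt ℝ (gradient (quarticForm M))
      (toLp 2 ((4 : ℝ) • (v.ofLp * M *ᵥ vsq x + (2 : ℝ) • (x.ofLp * M *ᵥ (x.ofLp * v.ofLp)))))
      x v := by
  have hline : HasDerivAt (fun t : ℝ ↦ x.ofLp + t • v.ofLp) v.ofLp 0 :=
    (hasFDerivAt_id x.ofLp).hasLineDerivAt v.ofLp
  have hprod := (hline.mul (hasDerivAt_mulVec M (hasDerivAt_vsq hline))).const_smul (4 : ℝ)
  simp only [HasLineDerivAt, gradient_quarticForm hM]
  refine ((PiLp.hasFDerivAt_toLp 2 _).comp_hasDerivAt (0 : ℝ) hprod).congr_deriv ?_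
  simp [mulVec_smul]

lemma inner_fderiv_gradient_quarticForm (hM : M.IsSymm) (x v : EuclideanSpace ℝ (Fin n)) :
    ⟪fderiv ℝ (gradient (quarticForm M)) x v, v⟫ =
      4 * (vsq v ⬝ᵥ M *ᵥ vsq x) + 8 * ((x.ofLp * v.ofLp) ⬝ᵥ M *ᵥ (x.ofLp * v.ofLp)) := by
  have hfderiv := (differentiable_gradient_quarticForm hM x).hasFDerivAt.hasLineDerivAt v
  rw [hfderiv.unique (hasLineDerivAt_gradient_quarticForm hM x v)]
  simp only [EuclideanSpace.inner_eq_star_dotProduct, star_trivial, dotProduct, Finset.mul_sum,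
    ← Finset.sum_add_distrib, vsq, Pi.smul_apply, Pi.mul_apply, Pi.add_apply, smul_eq_mul]
  exact Finset.sum_congr rfl fun i _ ↦ by ring

end QuarticForm

/-- If `xm` is a second-order point of `p(x) = (x²)ᵀ M (x²)` with `M` symmetric, then the
principal submatrix of `M` indexed by the nonzero entries of `xm` is positive semidefinite,
and `M xm²` vanishes at all indices where `xm` is nonzero. -/
theorem second_order_point_submatrix_posSemidef {n : ℕ} (M : Matrix (Fin n) (Fin n) ℝ)
    (hM : M.IsSymm) (xm : EuclideanSpace ℝ (Fin n))
    (hgrad : gradient (quarticForm M) xm = 0)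
    (hhess : ∀ v : EuclideanSpace ℝ (Fin n),
        0 ≤ ⟪fderiv ℝ (gradient (quarticForm M)) xm v, v⟫) :
    (M.submatrix (fun i : {i : Fin n // xm i ≠ 0} => (i : Fin n))
        (fun i : {i : Fin n // xm i ≠ 0} => (i : Fin n))).PosSemidef ∧
    (∀ i : Fin n, xm i ≠ 0 → M.mulVec (vsq xm) i = 0) := by
  have hzero (i : Fin n) (hi : xm i ≠ 0) : (M *ᵥ vsq xm) i = 0 := by
    have hgrad_i : gradient (quarticForm M) xm i = 0 := by rw [hgrad, PiLp.zero_apply]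
    simpa [gradient_quarticForm hM, hi] using hgrad_i
  refine ⟨posSemidef_submatrix_support hM fun v hv ↦ ?_, hzero⟩
  have hfirst : vsq v ⬝ᵥ M *ᵥ vsq xm = 0 := by
    refine Finset.sum_eq_zero fun i _ ↦ ?_
    by_cases hi : xm i = 0
    · simp [vsq, hv i hi]
    · rw [hzero i hi, mul_zero]
  have hnonneg := hhess (toLp 2 v)
  rw [inner_fderiv_gradient_quarticForm hM, hfirst] at hnonneg
  linarith
end
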